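/- Let p, q ∈ [0,1] and let ρ be any 4×4 complex matrix with trace 1. Then the probability of heralding the |−⟩ outcome on the control qubit of the quantum switch equals pq; that is, Tr[ (I₄ ⊗ |−⟩⟨−|) · S(ρ) ] = p·q, where S(ρ) = Σ_{i,j∈{1,2}} W_{ij} (ρ ⊗ |+⟩⟨+|) W_{ij}† and I₄ is the 4×4 identity. -/

import Mathlib

open Matrix Kronecker Complex

noncomputable section

def PX : Matrix (Fin 2) (Fin 2) ℂ := !![0, 1; 1, 0]
def PZ : Matrix (Fin 2) (Fin 2) ℂ := !![1, 0; 0, -1]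
def I2 : Matrix (Fin 2) (Fin 2) ℂ := 1

def ket0 : Fin 2 → ℂ := ![1, 0]
def ket1 : Fin 2 → ℂ := ![0, 1]
def ketPlus : Fin 2 → ℂ := ((Real.sqrt 2 : ℂ))⁻¹ • (ket0 + ket1)
def ketMinus : Fin 2 → ℂ := ((Real.sqrt 2 : ℂ))⁻¹ • (ket0 - ket1)

def proj (v : Fin 2 → ℂ) : Matrix (Fin 2) (Fin 2) ℂ := vecMulVec v (star v)

/-- Kronecker product, flattened to `Fin (m*n)` indices (row-major). -/
def kron {m n : ℕ} (A : Matrix (Fin m) (Fin m) ℂ) (B : Matrix (Fin n) (Fin n) ℂ) :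
    Matrix (Fin (m * n)) (Fin (m * n)) ℂ :=
  Matrix.reindex finProdFinEquiv finProdFinEquiv (A ⊗ₖ B)

/-- Bit-flip channel Kraus operators: D₁ = √(1-p)·I₂, D₂ = √p·X. -/
def Dk (p : ℝ) : Fin 2 → Matrix (Fin 2) (Fin 2) ℂ :=
  ![(Real.sqrt (1 - p) : ℂ) • I2, (Real.sqrt p : ℂ) • PX]

/-- Phase-flip channel Kraus operators: E₁ = √(1-q)·I₂, E₂ = √q·Z. -/
def Ek (q : ℝ) : Fin 2 → Matrix (Fin 2) (Fin 2) ℂ :=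
  ![(Real.sqrt (1 - q) : ℂ) • I2, (Real.sqrt q : ℂ) • PZ]

/-- Quantum-switch Kraus operators W_{ij} = I₂ ⊗ (DᵢEⱼ ⊗ |0⟩⟨0| + EⱼDᵢ ⊗ |1⟩⟨1|). -/
def W (p q : ℝ) (i j : Fin 2) : Matrix (Fin 8) (Fin 8) ℂ :=
  kron I2 (kron (Dk p i * Ek q j) (proj ket0) + kron (Ek q j * Dk p i) (proj ket1))

/-- Quantum-switch output S(ρ) = Σᵢⱼ W_{ij} (ρ ⊗ |+⟩⟨+|) W_{ij}†. -/
def Sout (p q : ℝ) (ρ : Matrix (Fin 4) (Fin 4) ℂ) : Matrix (Fin 8) (Fin 8) ℂ :=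
  ∑ i : Fin 2, ∑ j : Fin 2, W p q i j * kron ρ (proj ketPlus) * (W p q i j)ᴴ

/-- Contraction of the control-qubit factor of an 8×8 matrix with a vector v:
(I₄ ⊗ ⟨v|) M (I₄ ⊗ |v⟩). -/
def contractCtrl (M : Matrix (Fin 8) (Fin 8) ℂ) (v : Fin 2 → ℂ) :
    Matrix (Fin 4) (Fin 4) ℂ :=
  Matrix.of fun a b => ∑ i : Fin 2, ∑ j : Fin 2,
    star (v i) * M (finProdFinEquiv (a, i)) (finProdFinEquiv (b, j)) * v j

/-- Kronecker product of a two-qubit matrix with a control-qubit matrix, typed over `Fin 8`. -/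
def K (A : Matrix (Fin 4) (Fin 4) ℂ) (B : Matrix (Fin 2) (Fin 2) ℂ) :
    Matrix (Fin 8) (Fin 8) ℂ := kron A B

/-- Two-qubit Kronecker product, typed over `Fin 4`. -/
def L (A B : Matrix (Fin 2) (Fin 2) ℂ) : Matrix (Fin 4) (Fin 4) ℂ := kron A B

lemma kron_mul {m n : ℕ} (A A' : Matrix (Fin m) (Fin m) ℂ) (B B' : Matrix (Fin n) (Fin n) ℂ) :
    kron A B * kron A' B' = kron (A * A') (B * B') := by
  simp [kron, Matrix.mul_kronecker_mul, Matrix.submatrix_mul_equiv]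

lemma kron_trace {m n : ℕ} (A : Matrix (Fin m) (Fin m) ℂ) (B : Matrix (Fin n) (Fin n) ℂ) :
    (kron A B).trace = A.trace * B.trace := by
  rw [← Matrix.trace_kronecker]
  simp only [kron, Matrix.trace, Matrix.diag, Matrix.reindex_apply, Matrix.submatrix_apply]
  exact Equiv.sum_comp finProdFinEquiv.symm (fun x => (A ⊗ₖ B) x x)

lemma kron_conj {m n : ℕ} (A : Matrix (Fin m) (Fin m) ℂ) (B : Matrix (Fin n) (Fin n) ℂ) :
    (kron A B)ᴴ = kron Aᴴ Bᴴ := by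
  simp [kron, Matrix.conjTranspose_kronecker]

lemma kron_add {m n : ℕ} (A : Matrix (Fin m) (Fin m) ℂ) (B B' : Matrix (Fin n) (Fin n) ℂ) :
    kron A (B + B') = kron A B + kron A B' := by
  ext i j; simp [kron, mul_add]

lemma K_mul (A A' : Matrix (Fin 4) (Fin 4) ℂ) (B B' : Matrix (Fin 2) (Fin 2) ℂ) :
    K A B * K A' B' = K (A * A') (B * B') := kron_mul A A' B B'

lemma K_trace (A : Matrix (Fin 4) (Fin 4) ℂ) (B : Matrix (Fin 2) (Fin 2) ℂ) :
    (K A B).trace = A.trace * B.trace := kron_trace A B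

lemma K_conj (A : Matrix (Fin 4) (Fin 4) ℂ) (B : Matrix (Fin 2) (Fin 2) ℂ) :
    (K A B)ᴴ = K Aᴴ Bᴴ := kron_conj A B

lemma kron_assoc (A B C : Matrix (Fin 2) (Fin 2) ℂ) :
    (kron A (kron B C) : Matrix (Fin 8) (Fin 8) ℂ) = K (L A B) C := by
  ext i j
  fin_cases i <;> fin_cases j <;> exact (mul_assoc _ _ _).symm

lemma W_eq (p q : ℝ) (i j : Fin 2) : W p q i j =
    K (L I2 (Dk p i * Ek q j)) (proj ket0) + K (L I2 (Ek q j * Dk p i)) (proj ket1) := by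
  rw [← kron_assoc, ← kron_assoc]
  exact kron_add _ _ _

lemma sq2 : ((Real.sqrt 2 : ℂ))⁻¹ * ((Real.sqrt 2 : ℂ))⁻¹ = 1 / 2 := by
  rw [← mul_inv, ← Complex.ofReal_mul, Real.mul_self_sqrt (by norm_num)]
  norm_num

lemma proj_plus : proj ketPlus = !![1/2, 1/2; 1/2, 1/2] := by
  ext i j
  fin_cases i <;> fin_cases j <;>
    simp [proj, ketPlus, ket0, ket1, vecMulVec_apply, sq2]

lemma proj_minus : proj ketMinus = !![1/2, -1/2; -1/2, 1/2] := by
  ext i j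
  fin_cases i <;> fin_cases j <;>
    simp [proj, ketMinus, ket0, ket1, vecMulVec_apply, sq2] <;> norm_num

lemma proj_zero : proj ket0 = !![1, 0; 0, 0] := by
  ext i j
  fin_cases i <;> fin_cases j <;> simp [proj, ket0, vecMulVec_apply]

lemma proj_one : proj ket1 = !![0, 0; 0, 1] := by
  ext i j
  fin_cases i <;> fin_cases j <;> simp [proj, ket1, vecMulVec_apply]

lemma proj_conj (v : Fin 2 → ℂ) : (proj v)ᴴ = proj v := by
  ext i j
  simp [proj, vecMulVec_apply, mul_comm]

/-- Only the commutator part survives the `|−⟩` outcome. -/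
lemma term_trace (A B ρ : Matrix (Fin 4) (Fin 4) ℂ) :
    (K 1 (proj ketMinus) * ((K A (proj ket0) + K B (proj ket1)) * K ρ (proj ketPlus) *
      (K A (proj ket0) + K B (proj ket1))ᴴ)).trace
      = 1 / 4 * ((A - B) * ρ * (A - B)ᴴ).trace := by
  simp only [conjTranspose_add, conjTranspose_sub, K_conj, add_mul, mul_add, sub_mul, mul_sub,
    K_mul, trace_add, trace_sub, K_trace, proj_conj, one_mul]
  simp only [proj_plus, proj_minus, proj_zero, proj_one, Matrix.mul_fin_two,
    Matrix.trace_fin_two_of]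
  ring

lemma L_sub (A B C : Matrix (Fin 2) (Fin 2) ℂ) : L A B - L A C = L A (B - C) := by
  ext i j
  exact (mul_sub _ _ _).symm

lemma W_trace (p q : ℝ) (i j : Fin 2) (ρ : Matrix (Fin 4) (Fin 4) ℂ) :
    (K 1 (proj ketMinus) * (W p q i j * K ρ (proj ketPlus) * (W p q i j)ᴴ)).trace
      = 1 / 4 * (L I2 ((Dk p i * Ek q j - Ek q j * Dk p i)ᴴ * (Dk p i * Ek q j - Ek q j * Dk p i))
        * ρ).trace := by
  rw [W_eq, term_trace, L_sub, Matrix.trace_mul_comm, ← Matrix.mul_assoc]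
  have h1 : ∀ M, (L I2 M)ᴴ * L I2 M = L I2 (Mᴴ * M) := by
    intro M
    have h : (L I2 M)ᴴ = L I2ᴴ Mᴴ := kron_conj I2 M
    have h2 : L I2ᴴ Mᴴ * L I2 M = L (I2ᴴ * I2) (Mᴴ * M) := kron_mul _ _ _ _
    rw [h, h2]
    simp [I2]
  rw [h1]

lemma L_zero : L I2 0 = 0 := by
  ext i j
  exact mul_zero _

lemma L_smul_one (c : ℂ) : L I2 (c • 1) = c • 1 := by
  ext i j
  fin_cases i <;> fin_cases j <;>
    simp [L, kron, I2, finProdFinEquiv, Fin.divNat, Fin.modNat]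

lemma comm_sq (p q : ℝ) (hp : 0 ≤ p) (hq : 0 ≤ q) :
    (Dk p 1 * Ek q 1 - Ek q 1 * Dk p 1)ᴴ * (Dk p 1 * Ek q 1 - Ek q 1 * Dk p 1)
      = (4 * ((p * q : ℝ) : ℂ)) • 1 := by
  have h1 : (Real.sqrt p : ℂ) * Real.sqrt p = p := by
    rw [← Complex.ofReal_mul, Real.mul_self_sqrt hp]
  have h2 : (Real.sqrt q : ℂ) * Real.sqrt q = q := by
    rw [← Complex.ofReal_mul, Real.mul_self_sqrt hq]
  ext i j
  fin_cases i <;> fin_cases j <;>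
    simp [Dk, Ek, PX, PZ, Matrix.mul_apply, Fin.sum_univ_two] <;>
    rw [← h1, ← h2] <;> ring

theorem heralding_probability (p q : ℝ) (hp : p ∈ Set.Icc (0 : ℝ) 1)
    (hq : q ∈ Set.Icc (0 : ℝ) 1) (ρ : Matrix (Fin 4) (Fin 4) ℂ)
    (hρ : ρ.trace = 1) :
    (kron (1 : Matrix (Fin 4) (Fin 4) ℂ) (proj ketMinus) * Sout p q ρ).trace = (p * q : ℝ) := by
  have e : (kron (1 : Matrix (Fin 4) (Fin 4) ℂ) (proj ketMinus) * Sout p q ρ).trace =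
      (K 1 (proj ketMinus) *
        ∑ i : Fin 2, ∑ j : Fin 2, W p q i j * K ρ (proj ketPlus) * (W p q i j)ᴴ).trace := rfl
  rw [e]
  simp only [Fin.sum_univ_two, mul_add, Matrix.trace_add, W_trace]
  rw [comm_sq p q hp.1 hq.1, L_smul_one]
  have c1 : Dk p 0 * Ek q 0 - Ek q 0 * Dk p 0 = 0 := by
    simp [Dk, Ek, I2, smul_smul, mul_comm]
  have c2 : Dk p 0 * Ek q 1 - Ek q 1 * Dk p 0 = 0 := by
    simp [Dk, Ek, I2, smul_smul, mul_comm]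
  have c3 : Dk p 1 * Ek q 0 - Ek q 0 * Dk p 1 = 0 := by
    simp [Dk, Ek, I2, smul_smul, mul_comm]
  rw [c1, c2, c3]
  simp only [mul_zero, L_zero, zero_mul, Matrix.trace_zero, smul_mul_assoc, one_mul,
    Matrix.trace_smul, hρ, smul_eq_mul]
  ring

end
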